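/- Let q ≥ 2 be an even integer, λ > 0, and let {f_n^{(i)} : n, i ∈ ℕ} be a bi-indexed family of symmetric functions in L²(ℝ₊^q) such that for all i, j ∈ ℕ: ⟨f_n^{(i)}, f_n^{(j)}⟩ → λ and ‖f_n^{(i)} ⌢_{q/2} f_n^{(j)} − f_n^{(j)}‖ → 0 as n → ∞. Then for every integer m ≥ 2, every function χ : {1,…,m} → ℕ, and every tuple (r₁,…,r_{m−1}) ∈ D_m, the scalar iterated contraction (⋯((f_n^{(χ(1))} ⌢_{r₁} f_n^{(χ(2))}) ⌢_{r₂} f_n^{(χ(3))})⋯) ⌢_{r_{m−1}} f_n^{(χ(m))} converges, as n → ∞, to λ^j, where j is the number of indices p with r_p = q. -/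

import Mathlib

open MeasureTheory Filter Topology

noncomputable section

/-- The positive orthant `ℝ₊ⁿ` inside `ℝⁿ`. -/
def posOrthant (n : ℕ) : Set (Fin n → ℝ) := {x | ∀ i, 0 ≤ x i}

/-- Lebesgue measure restricted to the positive orthant; the measure underlying `L²(ℝ₊ⁿ)`. -/
def μpos (n : ℕ) : MeasureTheory.Measure (Fin n → ℝ) :=
  MeasureTheory.volume.restrict (posOrthant n)

/-- Total extension of a finite tuple, giving the junk value `0` out of range. -/
def pad {k : ℕ} (t : Fin k → ℝ) (i : ℕ) : ℝ := if h : i < k then t ⟨i, h⟩ else 0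

/-- The `L²` inner product `⟨f, g⟩ = ∫ f ⬝ conj g` over the positive orthant. -/
def L2inner (n : ℕ) (f g : (Fin n → ℝ) → ℂ) : ℂ :=
  ∫ x, f x * (starRingEnd ℂ) (g x) ∂(μpos n)

/-- The `L²` norm over the positive orthant. -/
def L2norm (n : ℕ) (f : (Fin n → ℝ) → ℂ) : ℝ :=
  Real.sqrt (∫ x, ‖f x‖ ^ 2 ∂(μpos n))

/-- The adjoint `f*(t₁,…,tₙ) = conj (f (tₙ,…,t₁))`. -/
def adjF (n : ℕ) (f : (Fin n → ℝ) → ℂ) : (Fin n → ℝ) → ℂ :=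
  fun t => (starRingEnd ℂ) (f fun i => t i.rev)

/-- `f` is symmetric when `f = f*` a.e. on the positive orthant. -/
def IsSymmFn (n : ℕ) (f : (Fin n → ℝ) → ℂ) : Prop :=
  ∀ᵐ t ∂(μpos n), f t = adjF n f t

/-- Reindexing a multivariate function along an equality of dimensions. -/
def reindex {a b : ℕ} (h : a = b) (F : (Fin a → ℝ) → ℂ) : (Fin b → ℝ) → ℂ :=
  fun t => F fun j => t (Fin.cast h j)

/-- The integrand (in the `s`-variables) of the `p`-th arc contraction
`(f ⌢_p g)(t₁,…,t_{m+n-2p}) = ∫ f(t₁,…,t_{m-p},s_p,…,s₁) g(s₁,…,s_p,t_{m-p+1},…,t_{m+n-2p}) ds`. -/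
def arcKer (m n p : ℕ) (f : (Fin m → ℝ) → ℂ) (g : (Fin n → ℝ) → ℂ)
    (t : Fin (m + n - 2 * p) → ℝ) (s : Fin p → ℝ) : ℂ :=
  f (fun j => if (j : ℕ) < m - p then pad t j else pad s (m - 1 - (j : ℕ))) *
  g (fun j => if (j : ℕ) < p then pad s j else pad t (m + (j : ℕ) - 2 * p))

/-- The `p`-th arc contraction `f ⌢_p g`. -/
def arc (m n p : ℕ) (f : (Fin m → ℝ) → ℂ) (g : (Fin n → ℝ) → ℂ) :
    (Fin (m + n - 2 * p) → ℝ) → ℂ :=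
  fun t => ∫ s in posOrthant p, arcKer m n p f g t s

/-- The integrand of the star contraction of index `(p, p-1)`:
`(f ⋆_p^{p-1} g)(t₁,…,t_{m+n-2p+1})
  = ∫ f(t₁,…,t_{m-p},t_{m-p+1},s_{p-1},…,s₁) g(s₁,…,s_{p-1},t_{m-p+1},…,t_{m+n-2p+1}) ds`. -/
def starKer (m n p : ℕ) (f : (Fin m → ℝ) → ℂ) (g : (Fin n → ℝ) → ℂ)
    (t : Fin (m + n + 1 - 2 * p) → ℝ) (s : Fin (p - 1) → ℝ) : ℂ :=
  f (fun j => if (j : ℕ) < m - p + 1 then pad t j else pad s (m - 1 - (j : ℕ))) *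
  g (fun j => if (j : ℕ) < p - 1 then pad s j else pad t (m + (j : ℕ) + 1 - 2 * p))

/-- The star contraction `f ⋆_p^{p-1} g` of index `(p, p-1)`. -/
def starC (m n p : ℕ) (f : (Fin m → ℝ) → ℂ) (g : (Fin n → ℝ) → ℂ) :
    (Fin (m + n + 1 - 2 * p) → ℝ) → ℂ :=
  fun t => ∫ s in posOrthant (p - 1), starKer m n p f g t s

/-- The `q/2`-th arc contraction of two functions of `q` (even) variables,
expressed again as a function of `q` variables. -/
def contrHalf (q : ℕ) (f g : (Fin q → ℝ) → ℂ) : (Fin q → ℝ) → ℂ :=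
  fun t => ∫ s in posOrthant (q / 2),
    (f fun j => if (j : ℕ) < q - q / 2 then pad t j else pad s (q - 1 - (j : ℕ))) *
    (g fun j => if (j : ℕ) < q / 2 then pad s j else pad t (q + (j : ℕ) - 2 * (q / 2)))

/-- The full contraction `f ⌢_q g = ∫ f(t₁,…,t_q) g(t_q,…,t₁) dt` of two
functions of `q` variables. -/
def fullContr (q : ℕ) (f g : (Fin q → ℝ) → ℂ) : ℂ :=
  ∫ t in posOrthant q, f t * g fun i => t i.rev

/-- A `q`-dimensional square (cube): a product of `q` intervals of equal length. -/
def IsCube (q : ℕ) (S : Set (Fin q → ℝ)) : Prop :=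
  ∃ (a : Fin q → ℝ) (c : ℝ), S = Set.univ.pi fun i => Set.Icc (a i) (a i + c)

/-- One step of the left-bracketed iterated contraction, keeping track of the dimension. -/
def iterStep (q : ℕ) (acc : (d : ℕ) × ((Fin d → ℝ) → ℂ))
    (pr : ℕ × ((Fin q → ℝ) → ℂ)) : (d : ℕ) × ((Fin d → ℝ) → ℂ) :=
  ⟨acc.1 + q - 2 * pr.1, arc acc.1 q pr.1 acc.2 pr.2⟩

/-- The left-bracketed iterated contraction `(⋯((f₀ ⌢_{r₁} f₁) ⌢_{r₂} f₂)⋯) ⌢_{r_k} f_k`. -/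
def iterArc (q : ℕ) (f0 : (Fin q → ℝ) → ℂ) (l : List (ℕ × ((Fin q → ℝ) → ℂ))) :
    (d : ℕ) × ((Fin d → ℝ) → ℂ) :=
  l.foldl (iterStep q) ⟨q, f0⟩

/-- The value of a (`0`-dimensional, i.e. scalar) iterated contraction. -/
def scalarOf (x : (d : ℕ) × ((Fin d → ℝ) → ℂ)) : ℂ := x.2 fun _ => 0


/-- Membership in `A_m`: tuples `(r₁,…,r_{m-1}) ∈ {0,…,q}^{m-1}` (encoded as the values of
`r` at `1,…,m-1`) satisfying `r_p ≤ pq - 2(r₁+⋯+r_{p-1})` for `2 ≤ p ≤ m-1`. -/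
def memA (q m : ℕ) (r : ℕ → ℕ) : Prop :=
  (∀ p, 1 ≤ p → p ≤ m - 1 → r p ≤ q) ∧
  (∀ p, 2 ≤ p → p ≤ m - 1 → r p + 2 * ∑ k ∈ Finset.Icc 1 (p - 1), r k ≤ p * q)

/-- Membership in `B_m`: tuples of `A_m` with `2(r₁+⋯+r_{m-1}) = mq`. -/
def memB (q m : ℕ) (r : ℕ → ℕ) : Prop :=
  memA q m r ∧ 2 * ∑ k ∈ Finset.Icc 1 (m - 1), r k = m * q

/-- Membership in `D_m = B_m ∩ {0, q/2, q}^{m-1}`. -/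
def memD (q m : ℕ) (r : ℕ → ℕ) : Prop :=
  memB q m r ∧ ∀ p, 1 ≤ p → p ≤ m - 1 → (r p = 0 ∨ r p = q / 2 ∨ r p = q)

/-- Membership in `E_m = B_m \ D_m`. -/
def memE (q m : ℕ) (r : ℕ → ℕ) : Prop := memB q m r ∧ ¬ memD q m r

/-!
After each step the accumulated contraction is a scalar times a tensor product of blocks of `q`
variables, each block asymptotic in `L²` to some `f^{(i)}`. Contracting with `f^{(j)}` only touches
the last block `g`: for `r = 0` it appends the block `f^{(j)}`; for `r = q/2` it replaces `g` by
`g ⌢_{q/2} f^{(j)}`, which is again asymptotic to `f^{(j)}`; for `r = q` it removes `g` and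
multiplies the scalar by `⟨g, f^{(j)}⟩`, which tends to `λ`. The errors are controlled by
`‖f ⌢_p g‖ ≤ ‖f‖ ‖g‖`, which holds because an arc contraction is a composition of Hilbert–Schmidt
kernels. At the end no block is left, and each `r = q` has contributed one factor `λ`.
-/

section KernelComposition

variable {𝕜 X Y Z : Type*} [RCLike 𝕜] [MeasurableSpace X] [MeasurableSpace Y] [MeasurableSpace Z]

theorem sq_eLpNorm_two {μ : Measure X} (f : X → 𝕜) :
    eLpNorm f 2 μ ^ 2 = ∫⁻ x, ‖f x‖ₑ ^ 2 ∂μ := by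
  simpa using eLpNorm_nnreal_pow_eq_lintegral (μ := μ) (f := f) (p := 2) two_ne_zero

theorem enorm_integral_mul_le_eLpNorm_mul_eLpNorm {μ : Measure X} {f g : X → 𝕜}
    (hf : AEStronglyMeasurable f μ) (hg : AEStronglyMeasurable g μ) :
    ‖∫ x, f x * g x ∂μ‖ₑ ≤ eLpNorm f 2 μ * eLpNorm g 2 μ := by
  calc ‖∫ x, f x * g x ∂μ‖ₑ ≤ ∫⁻ x, ‖f x * g x‖ₑ ∂μ := enorm_integral_le_lintegral_enorm _
    _ = eLpNorm (f • g) 1 μ := eLpNorm_one_eq_lintegral_enorm.symm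
    _ ≤ eLpNorm f 2 μ * eLpNorm g 2 μ := eLpNorm_smul_le_mul_eLpNorm hg hf

variable {μ : Measure X} {ν : Measure Y} {ρ : Measure Z}

theorem lintegral_sq_eLpNorm_section_left [SFinite ν] {K : X × Y → 𝕜}
    (hK : AEStronglyMeasurable K (μ.prod ν)) :
    ∫⁻ x, eLpNorm (fun y => K (x, y)) 2 ν ^ 2 ∂μ = eLpNorm K 2 (μ.prod ν) ^ 2 := by
  simp_rw [sq_eLpNorm_two]
  exact (lintegral_prod _ (hK.enorm.pow_const 2)).symm

theorem lintegral_sq_eLpNorm_section_right [SFinite μ] [SFinite ν] {K : X × Y → 𝕜}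
    (hK : AEStronglyMeasurable K (μ.prod ν)) :
    ∫⁻ y, eLpNorm (fun x => K (x, y)) 2 μ ^ 2 ∂ν = eLpNorm K 2 (μ.prod ν) ^ 2 := by
  simp_rw [sq_eLpNorm_two]
  exact (lintegral_prod_symm _ (hK.enorm.pow_const 2)).symm

theorem memLp_section_left [SFinite μ] [SFinite ν] {K : X × Y → 𝕜} (hK : MemLp K 2 (μ.prod ν)) :
    ∀ᵐ x ∂μ, MemLp (fun y => K (x, y)) 2 ν := by
  filter_upwards [hK.1.prodMk_left,
    ((memLp_two_iff_integrable_sq_norm hK.1).1 hK).prod_right_ae] with x hmeas hint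
  exact (memLp_two_iff_integrable_sq_norm hmeas).2 hint

theorem memLp_section_right [SFinite μ] [SFinite ν] {K : X × Y → 𝕜}
    (hK : MemLp K 2 (μ.prod ν)) :
    ∀ᵐ y ∂ν, MemLp (fun x => K (x, y)) 2 μ :=
  memLp_section_left (hK.comp_measurePreserving Measure.measurePreserving_swap)

/-- The composition `(K ∘ L)(x, z) = ∫ K(x, y) L(y, z) dν(y)` of two integral kernels. -/
def kernelComp (ν : Measure Y) (K : X × Y → 𝕜) (L : Y × Z → 𝕜) (z : X × Z) : 𝕜 :=
  ∫ y, K (z.1, y) * L (y, z.2) ∂ν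

variable [SFinite ν] [SFinite ρ]

theorem aestronglyMeasurable_kernelComp [SFinite μ] {K : X × Y → 𝕜} {L : Y × Z → 𝕜}
    (hK : AEStronglyMeasurable K (μ.prod ν)) (hL : AEStronglyMeasurable L (ν.prod ρ)) :
    AEStronglyMeasurable (kernelComp ν K L) (μ.prod ρ) := by
  have hfst : Measure.QuasiMeasurePreserving (fun w : (X × Z) × Y => (w.1.1, w.2))
      ((μ.prod ρ).prod ν) (μ.prod ν) :=
    QuasiMeasurePreserving.prodMap Measure.quasiMeasurePreserving_fst (.id ν)
  have hsnd : Measure.QuasiMeasurePreserving (fun w : (X × Z) × Y => (w.2, w.1.2))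
      ((μ.prod ρ).prod ν) (ν.prod ρ) :=
    Measure.measurePreserving_swap.quasiMeasurePreserving.comp
      (QuasiMeasurePreserving.prodMap Measure.quasiMeasurePreserving_snd (.id ν))
  exact ((hK.comp_quasiMeasurePreserving hfst).mul
    (hL.comp_quasiMeasurePreserving hsnd)).integral_prod_right'

theorem eLpNorm_kernelComp_le {K : X × Y → 𝕜} {L : Y × Z → 𝕜}
    (hK : AEStronglyMeasurable K (μ.prod ν)) (hL : AEStronglyMeasurable L (ν.prod ρ)) :
    eLpNorm (kernelComp ν K L) 2 (μ.prod ρ) ≤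
      eLpNorm K 2 (μ.prod ν) * eLpNorm L 2 (ν.prod ρ) := by
  have hpointwise : ∀ᵐ z ∂μ.prod ρ, ‖kernelComp ν K L z‖ₑ ≤
      eLpNorm (fun y => K (z.1, y)) 2 ν * eLpNorm (fun y => L (y, z.2)) 2 ν := by
    filter_upwards [Measure.quasiMeasurePreserving_fst.ae hK.prodMk_left,
      Measure.quasiMeasurePreserving_snd.ae hL.prodMk_right] with z hKz hLz
    exact enorm_integral_mul_le_eLpNorm_mul_eLpNorm hKz hLz
  have hKsec : AEMeasurable (fun x => eLpNorm (fun y => K (x, y)) 2 ν ^ 2) μ := by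
    simp_rw [sq_eLpNorm_two]
    exact (hK.enorm.pow_const 2).lintegral_prod_right'
  have hLsec : AEMeasurable (fun z => eLpNorm (fun y => L (y, z)) 2 ν ^ 2) ρ := by
    simp_rw [sq_eLpNorm_two]
    exact (hL.enorm.pow_const 2).lintegral_prod_left'
  refine (ENNReal.pow_le_pow_left_iff two_ne_zero).1 ?_
  calc eLpNorm (kernelComp ν K L) 2 (μ.prod ρ) ^ 2
      = ∫⁻ z, ‖kernelComp ν K L z‖ₑ ^ 2 ∂μ.prod ρ := sq_eLpNorm_two _
    _ ≤ ∫⁻ z, eLpNorm (fun y => K (z.1, y)) 2 ν ^ 2 *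
          eLpNorm (fun y => L (y, z.2)) 2 ν ^ 2 ∂μ.prod ρ := by
        refine lintegral_mono_ae (hpointwise.mono fun z hz => ?_)
        rw [← mul_pow]
        gcongr
    _ = eLpNorm K 2 (μ.prod ν) ^ 2 * eLpNorm L 2 (ν.prod ρ) ^ 2 := by
        rw [lintegral_prod_mul hKsec hLsec, lintegral_sq_eLpNorm_section_left hK,
          lintegral_sq_eLpNorm_section_right hL]
    _ = (eLpNorm K 2 (μ.prod ν) * eLpNorm L 2 (ν.prod ρ)) ^ 2 := (mul_pow _ _ _).symm

theorem memLp_kernelComp [SFinite μ] {K : X × Y → 𝕜} {L : Y × Z → 𝕜}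
    (hK : MemLp K 2 (μ.prod ν)) (hL : MemLp L 2 (ν.prod ρ)) :
    MemLp (kernelComp ν K L) 2 (μ.prod ρ) :=
  ⟨aestronglyMeasurable_kernelComp hK.1 hL.1,
    (eLpNorm_kernelComp_le hK.1 hL.1).trans_lt (ENNReal.mul_lt_top hK.2 hL.2)⟩

theorem kernelComp_sub_left [SFinite μ] {K K' : X × Y → 𝕜} {L : Y × Z → 𝕜}
    (hK : MemLp K 2 (μ.prod ν)) (hK' : MemLp K' 2 (μ.prod ν)) (hL : MemLp L 2 (ν.prod ρ)) :
    kernelComp ν (K - K') L =ᵐ[μ.prod ρ] kernelComp ν K L - kernelComp ν K' L := by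
  filter_upwards [Measure.quasiMeasurePreserving_fst.ae (memLp_section_left hK),
    Measure.quasiMeasurePreserving_fst.ae (memLp_section_left hK'),
    Measure.quasiMeasurePreserving_snd.ae (memLp_section_right hL)] with z hKz hK'z hLz
  simp only [kernelComp, Pi.sub_apply, sub_mul]
  exact integral_sub (hKz.integrable_mul hLz) (hK'z.integrable_mul hLz)

end KernelComposition

section Orthant

theorem μpos_eq_pi (n : ℕ) :
    μpos n = Measure.pi fun _ : Fin n => (volume : Measure ℝ).restrict (Set.Ici 0) := by
  rw [μpos, ← Measure.restrict_pi_pi, ← volume_pi, Set.pi_univ_Ici]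
  rfl

instance (n : ℕ) : SigmaFinite (μpos n) := by
  unfold μpos
  infer_instance

instance : IsProbabilityMeasure (μpos 0) where
  measure_univ := by simp [μpos_eq_pi]

theorem measurePreserving_reindex_equiv {a b : ℕ} (e : Fin a ≃ Fin b) :
    MeasurePreserving (MeasurableEquiv.arrowCongr' e (.refl ℝ)) (μpos a) (μpos b) := by
  simp_rw [μpos_eq_pi]
  exact measurePreserving_arrowCongr' _ _ e _ fun _ => .id _

theorem measurePreserving_comp_rev (n : ℕ) :
    MeasurePreserving (fun t : Fin n → ℝ => t ∘ Fin.rev) (μpos n) (μpos n) :=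
  measurePreserving_reindex_equiv Fin.revPerm

theorem measurePreserving_comp_cast {a b : ℕ} (h : a = b) :
    MeasurePreserving (fun t : Fin b → ℝ => t ∘ Fin.cast h) (μpos b) (μpos a) :=
  measurePreserving_reindex_equiv (finCongr h.symm)

theorem integral_comp_rev {n : ℕ} {E : Type*} [NormedAddCommGroup E] [NormedSpace ℝ E]
    (F : (Fin n → ℝ) → E) : ∫ t, F (t ∘ Fin.rev) ∂μpos n = ∫ t, F t ∂μpos n :=
  (measurePreserving_reindex_equiv Fin.revPerm).integral_comp' F

theorem measurePreserving_split (a b : ℕ) :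
    MeasurePreserving
      (fun t : Fin (a + b) → ℝ => (t ∘ Fin.castAdd b, t ∘ Fin.natAdd a))
      (μpos (a + b)) ((μpos a).prod (μpos b)) := by
  simp_rw [μpos_eq_pi]
  exact (measurePreserving_sumPiEquivProdPi
      fun _ : Fin a ⊕ Fin b => (volume : Measure ℝ).restrict (Set.Ici 0)).comp
    (measurePreserving_arrowCongr' _ _ finSumFinEquiv.symm (.refl ℝ) fun _ => .id _)

theorem measurePreserving_append (a b : ℕ) :
    MeasurePreserving (fun z : (Fin a → ℝ) × (Fin b → ℝ) => Fin.append z.1 z.2)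
      ((μpos a).prod (μpos b)) (μpos (a + b)) :=
  MeasurePreserving.symm
    { toEquiv := (Fin.appendEquiv a b).symm
      measurable_toFun := (measurePreserving_split a b).measurable
      measurable_invFun := by
        refine measurable_pi_iff.2 (Fin.addCases (fun i => ?_) fun i => ?_)
        · simpa [Fin.appendEquiv] using by fun_prop
        · simpa [Fin.appendEquiv] using by fun_prop }
    (measurePreserving_split a b)

theorem measurePreserving_append_rev (a b : ℕ) :
    MeasurePreserving (fun z : (Fin a → ℝ) × (Fin b → ℝ) => Fin.append z.1 (z.2 ∘ Fin.rev))
      ((μpos a).prod (μpos b)) (μpos (a + b)) :=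
  (measurePreserving_append a b).comp ((MeasurePreserving.id _).prod (measurePreserving_comp_rev b))

end Orthant

section Arc

theorem pad_val {n : ℕ} (t : Fin n → ℝ) (i : Fin n) : pad t i = t i :=
  dif_pos i.2

theorem pad_restrict {d : ℕ} (t : ℕ → ℝ) {i : ℕ} (hi : i < d) :
    pad (fun j : Fin d => t j) i = t i :=
  dif_pos hi

theorem pad_comp_cast {a b : ℕ} (h : a = b) (t : Fin b → ℝ) (i : ℕ) :
    pad (fun j => t (Fin.cast h j)) i = pad t i := by
  subst h
  rfl

theorem measurePreserving_split_pad {a b d : ℕ} (h : a + b = d) :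
    MeasurePreserving
      (fun t : Fin d → ℝ => (fun i : Fin a => pad t i, fun j : Fin b => pad t (a + j)))
      (μpos d) ((μpos a).prod (μpos b)) := by
  subst h
  convert measurePreserving_split a b using 2 with t
  exact Prod.ext (funext fun i => pad_val t (Fin.castAdd b i))
    (funext fun j => pad_val t (Fin.natAdd a j))

theorem arc_eq_kernelComp (a p b : ℕ) (F : (Fin (a + p) → ℝ) → ℂ) (G : (Fin (p + b) → ℝ) → ℂ) :
    arc (a + p) (p + b) p F G =
      kernelComp (μpos p) (F ∘ fun z => Fin.append z.1 (z.2 ∘ Fin.rev))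
        (G ∘ fun z => Fin.append z.1 z.2) ∘
      fun t => (fun i : Fin a => pad t i, fun j : Fin b => pad t (a + j)) := by
  refine funext fun t => integral_congr_ae (.of_forall fun s => ?_)
  refine congrArg₂ _ (congrArg F (funext (Fin.addCases (fun i => ?_) fun i => ?_)))
    (congrArg G (funext (Fin.addCases (fun i => ?_) fun i => ?_)))
  · simp
  · suffices pad s (a + p - 1 - (a + i)) = s i.rev by simpa
    rw [← pad_val s i.rev, Fin.val_rev]
    congr 1
    omega
  · simp [pad_val]
  · suffices pad t (a + p + (p + i) - 2 * p) = pad t (a + i) by simpa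
    congr 1
    omega

variable {m n p : ℕ} {F F' : (Fin m → ℝ) → ℂ} {G : (Fin n → ℝ) → ℂ}

theorem memLp_arc (hpm : p ≤ m) (hpn : p ≤ n) (hF : MemLp F 2 (μpos m))
    (hG : MemLp G 2 (μpos n)) : MemLp (arc m n p F G) 2 (μpos (m + n - 2 * p)) := by
  obtain ⟨a, rfl⟩ := Nat.exists_eq_add_of_le' hpm
  obtain ⟨b, rfl⟩ := Nat.exists_eq_add_of_le hpn
  rw [arc_eq_kernelComp]
  exact (memLp_kernelComp (hF.comp_measurePreserving (measurePreserving_append_rev a p))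
    (hG.comp_measurePreserving (measurePreserving_append p b))).comp_measurePreserving
      (measurePreserving_split_pad (by omega))

theorem eLpNorm_arc_le (hpm : p ≤ m) (hpn : p ≤ n) (hF : AEStronglyMeasurable F (μpos m))
    (hG : AEStronglyMeasurable G (μpos n)) :
    eLpNorm (arc m n p F G) 2 (μpos (m + n - 2 * p)) ≤
      eLpNorm F 2 (μpos m) * eLpNorm G 2 (μpos n) := by
  obtain ⟨a, rfl⟩ := Nat.exists_eq_add_of_le' hpm
  obtain ⟨b, rfl⟩ := Nat.exists_eq_add_of_le hpn
  have hleft := measurePreserving_append_rev a p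
  have hright := measurePreserving_append p b
  have hK := hF.comp_measurePreserving hleft
  have hL := hG.comp_measurePreserving hright
  rw [arc_eq_kernelComp, eLpNorm_comp_measurePreserving (aestronglyMeasurable_kernelComp hK hL)
      (measurePreserving_split_pad (by omega)),
    ← eLpNorm_comp_measurePreserving hF hleft, ← eLpNorm_comp_measurePreserving hG hright]
  exact eLpNorm_kernelComp_le hK hL

theorem arc_sub_left (hpm : p ≤ m) (hpn : p ≤ n) (hF : MemLp F 2 (μpos m))
    (hF' : MemLp F' 2 (μpos m)) (hG : MemLp G 2 (μpos n)) :
    arc m n p (F - F') G =ᵐ[μpos (m + n - 2 * p)] arc m n p F G - arc m n p F' G := by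
  obtain ⟨a, rfl⟩ := Nat.exists_eq_add_of_le' hpm
  obtain ⟨b, rfl⟩ := Nat.exists_eq_add_of_le hpn
  simp_rw [arc_eq_kernelComp]
  have hleft := measurePreserving_append_rev a p
  have hsub := kernelComp_sub_left (hF.comp_measurePreserving hleft)
    (hF'.comp_measurePreserving hleft)
    (hG.comp_measurePreserving (measurePreserving_append p b))
  have hsplit := measurePreserving_split_pad (show a + b = a + p + (p + b) - 2 * p by omega)
  exact hsplit.quasiMeasurePreserving.ae hsub

theorem add_self_sub_two_mul_half {q : ℕ} (hq : Even q) : q + q - 2 * (q / 2) = q := by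
  rw [Nat.two_mul_div_two_of_even hq, Nat.add_sub_cancel]

variable {q : ℕ} {f f' g : (Fin q → ℝ) → ℂ}

theorem contrHalf_eq_reindex_arc (h : q + q - 2 * (q / 2) = q) (f g : (Fin q → ℝ) → ℂ) :
    contrHalf q f g = reindex h (arc q q (q / 2) f g) := by
  funext t
  simp only [contrHalf, reindex, arc, arcKer, pad_comp_cast]

theorem memLp_contrHalf (hq : Even q) (hf : MemLp f 2 (μpos q)) (hg : MemLp g 2 (μpos q)) :
    MemLp (contrHalf q f g) 2 (μpos q) := by
  rw [contrHalf_eq_reindex_arc (add_self_sub_two_mul_half hq)]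
  exact (memLp_arc (by omega) (by omega) hf hg).comp_measurePreserving
    (measurePreserving_comp_cast (add_self_sub_two_mul_half hq))

theorem eLpNorm_contrHalf_le (hq : Even q) (hf : MemLp f 2 (μpos q)) (hg : MemLp g 2 (μpos q)) :
    eLpNorm (contrHalf q f g) 2 (μpos q) ≤ eLpNorm f 2 (μpos q) * eLpNorm g 2 (μpos q) := by
  have harc : MemLp (arc q q (q / 2) f g) 2 _ := memLp_arc (by omega) (by omega) hf hg
  calc eLpNorm (contrHalf q f g) 2 (μpos q)
      = eLpNorm (arc q q (q / 2) f g) 2 _ := by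
        rw [contrHalf_eq_reindex_arc (add_self_sub_two_mul_half hq)]
        exact eLpNorm_comp_measurePreserving harc.1
          (measurePreserving_comp_cast (add_self_sub_two_mul_half hq))
    _ ≤ eLpNorm f 2 (μpos q) * eLpNorm g 2 (μpos q) :=
        eLpNorm_arc_le (by omega) (by omega) hf.1 hg.1

theorem contrHalf_sub_left (hq : Even q) (hf : MemLp f 2 (μpos q)) (hf' : MemLp f' 2 (μpos q))
    (hg : MemLp g 2 (μpos q)) :
    contrHalf q (f - f') g =ᵐ[μpos q] contrHalf q f g - contrHalf q f' g := by
  simp_rw [contrHalf_eq_reindex_arc (add_self_sub_two_mul_half hq)]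
  exact (measurePreserving_comp_cast (add_self_sub_two_mul_half hq)).quasiMeasurePreserving.ae
    (arc_sub_left (by omega) (by omega) hf hf' hg)

end Arc

section L2

variable {n : ℕ} {f g h : (Fin n → ℝ) → ℂ}

theorem L2norm_eq_norm_toLp (hf : MemLp f 2 (μpos n)) : L2norm n f = ‖hf.toLp f‖ := by
  rw [Lp.norm_toLp, hf.eLpNorm_eq_integral_rpow_norm two_ne_zero ENNReal.ofNat_ne_top,
    ENNReal.toReal_ofReal (by positivity)]
  simp [L2norm, Real.sqrt_eq_rpow]

theorem L2inner_eq_inner_toLp (hf : MemLp f 2 (μpos n)) (hg : MemLp g 2 (μpos n)) :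
    L2inner n f g = inner ℂ (hg.toLp g) (hf.toLp f) := by
  rw [L2.inner_def]
  refine integral_congr_ae ?_
  filter_upwards [hf.coeFn_toLp, hg.coeFn_toLp] with t hft hgt
  rw [hft, hgt, RCLike.inner_apply]

theorem L2norm_congr_ae (hfg : f =ᵐ[μpos n] g) : L2norm n f = L2norm n g :=
  congrArg Real.sqrt (integral_congr_ae (hfg.fun_comp fun z => ‖z‖ ^ 2))

theorem L2norm_add_le (hf : MemLp f 2 (μpos n)) (hg : MemLp g 2 (μpos n)) :
    L2norm n (f + g) ≤ L2norm n f + L2norm n g := by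
  rw [L2norm_eq_norm_toLp hf, L2norm_eq_norm_toLp hg, L2norm_eq_norm_toLp (hf.add hg)]
  exact norm_add_le (hf.toLp f) (hg.toLp g)

theorem L2inner_sub_left (hf : MemLp f 2 (μpos n)) (hg : MemLp g 2 (μpos n))
    (hh : MemLp h 2 (μpos n)) : L2inner n (f - g) h = L2inner n f h - L2inner n g h := by
  rw [L2inner_eq_inner_toLp hf hh, L2inner_eq_inner_toLp hg hh,
    L2inner_eq_inner_toLp (hf.sub hg) hh]
  exact inner_sub_right (hh.toLp h) (hf.toLp f) (hg.toLp g)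

theorem norm_L2inner_le (hf : MemLp f 2 (μpos n)) (hg : MemLp g 2 (μpos n)) :
    ‖L2inner n f g‖ ≤ L2norm n f * L2norm n g := by
  rw [L2inner_eq_inner_toLp hf hg, L2norm_eq_norm_toLp hf, L2norm_eq_norm_toLp hg, mul_comm]
  exact norm_inner_le_norm (hg.toLp g) (hf.toLp f)

theorem L2norm_eq_sqrt_re_L2inner (hf : MemLp f 2 (μpos n)) :
    L2norm n f = √(L2inner n f f).re := by
  rw [L2norm_eq_norm_toLp hf, L2inner_eq_inner_toLp hf hf]
  exact norm_eq_sqrt_re_inner (𝕜 := ℂ) (hf.toLp f)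

theorem L2norm_contrHalf_le (hn : Even n) (hf : MemLp f 2 (μpos n)) (hg : MemLp g 2 (μpos n)) :
    L2norm n (contrHalf n f g) ≤ L2norm n f * L2norm n g := by
  rw [L2norm_eq_norm_toLp hf, L2norm_eq_norm_toLp hg,
    L2norm_eq_norm_toLp (memLp_contrHalf hn hf hg)]
  simp_rw [Lp.norm_toLp, ← ENNReal.toReal_mul]
  exact ENNReal.toReal_mono (ENNReal.mul_ne_top hf.2.ne hg.2.ne) (eLpNorm_contrHalf_le hn hf hg)

theorem fullContr_eq_L2inner (hg : IsSymmFn n g) : fullContr n f g = L2inner n f g := by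
  refine integral_congr_ae (hg.mono fun t ht => ?_)
  simp [ht, adjF]

end L2

/-- A complex function of finitely many real variables, bundled with its number of variables as in
`iterStep`. -/
abbrev TupleFn : Type := (d : ℕ) × ((Fin d → ℝ) → ℂ)

namespace TupleFn

/-- The scalar `c` as a function of no variables. -/
def const (c : ℂ) : TupleFn := ⟨0, fun _ => c⟩

/-- The tensor product `(x ⊗ y)(s, t) = x(s) y(t)`. -/
def tensor (x y : TupleFn) : TupleFn :=
  ⟨x.1 + y.1, fun t => x.2 (t ∘ Fin.castAdd y.1) * y.2 (t ∘ Fin.natAdd x.1)⟩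

/-- Evaluation at the initial segment of a sequence. It compares functions whose numbers of
variables are equal, but not definitionally so, without any cast. -/
def eval (x : TupleFn) (t : ℕ → ℝ) : ℂ := x.2 fun i => t i

theorem ext_eval {x y : TupleFn} (hdim : x.1 = y.1) (heval : ∀ t, x.eval t = y.eval t) :
    x = y := by
  obtain ⟨d, F⟩ := x
  obtain ⟨_, G⟩ := y
  obtain rfl : d = _ := hdim
  congr with t
  simpa [eval, pad_val] using heval (pad t)

theorem eval_tensor (x y : TupleFn) (t : ℕ → ℝ) :
    (x.tensor y).eval t = x.eval t * y.eval fun j => t (x.1 + j) := rfl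

theorem eval_congr (x : TupleFn) {t t' : ℕ → ℝ} (h : ∀ i < x.1, t i = t' i) :
    x.eval t = x.eval t' :=
  congrArg x.2 (funext fun i => h i i.2)

theorem mk_reindex {a b : ℕ} (h : a = b) (F : (Fin a → ℝ) → ℂ) :
    (⟨b, reindex h F⟩ : TupleFn) = ⟨a, F⟩ := by
  subst h
  rfl

theorem const_one_tensor (x : TupleFn) : (const 1).tensor x = x :=
  ext_eval (Nat.zero_add _) fun t => by simp [eval, const, tensor, Function.comp_def]

theorem const_tensor_const (c c' : ℂ) : (const c).tensor (const c') = const (c * c') := rfl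

theorem tensor_const_right_comm (x y : TupleFn) (c : ℂ) :
    (x.tensor y).tensor (const c) = (x.tensor (const c)).tensor y :=
  ext_eval (Nat.add_right_comm _ _ _) fun _ => mul_right_comm _ _ _

end TupleFn

open TupleFn

section IterStep

variable {q : ℕ}

theorem eval_iterStep (x : TupleFn) {p : ℕ} (hpx : p ≤ x.1) (hpq : p ≤ q)
    (g : (Fin q → ℝ) → ℂ) (t : ℕ → ℝ) :
    eval (iterStep q x (p, g)) t =
      ∫ s, (x.eval fun j => if j < x.1 - p then t j else pad s (x.1 - 1 - j)) *
        (g fun j => if (j : ℕ) < p then pad s j else t (x.1 + j - 2 * p)) ∂μpos p := by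
  refine integral_congr_ae (.of_forall fun s => ?_)
  refine congrArg₂ _ (congrArg x.2 (funext fun j => ?_)) (congrArg g (funext fun j => ?_))
  · exact ite_congr rfl (fun _ => pad_restrict t (by omega)) fun _ => rfl
  · exact ite_congr rfl (fun _ => rfl) fun _ => pad_restrict t (by omega)

theorem iterStep_zero (x : TupleFn) (g : (Fin q → ℝ) → ℂ) :
    iterStep q x (0, g) = x.tensor ⟨q, g⟩ := by
  refine ext_eval rfl fun t => ?_
  rw [eval_iterStep x (Nat.zero_le _) (Nat.zero_le _), eval_tensor]
  simp [eval]

theorem iterStep_tensor (x y : TupleFn) {p : ℕ} (hpy : p ≤ y.1) (hpq : p ≤ q)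
    (g : (Fin q → ℝ) → ℂ) :
    iterStep q (x.tensor y) (p, g) = x.tensor (iterStep q y (p, g)) := by
  have hdim : (x.tensor y).1 = x.1 + y.1 := rfl
  refine ext_eval (by simp only [iterStep, tensor]; omega) fun t => ?_
  rw [eval_tensor, eval_iterStep y hpy hpq, eval_iterStep _ (by omega) hpq,
    ← integral_const_mul]
  refine integral_congr_ae (.of_forall fun s => ?_)
  dsimp only
  rw [eval_tensor, mul_assoc]
  refine congrArg₂ _ (x.eval_congr fun i hi => if_pos (by omega)) (congrArg₂ _
    (y.eval_congr fun i hi => ?_) (congrArg g (funext fun j => ?_)))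
  · exact ite_congr (propext (by omega)) (fun _ => rfl)
      fun _ => congrArg (pad s) (by omega)
  · exact ite_congr rfl (fun _ => rfl) fun _ => congrArg t (by omega)

theorem iterStep_half (hq : Even q) (f g : (Fin q → ℝ) → ℂ) :
    iterStep q ⟨q, f⟩ (q / 2, g) = ⟨q, contrHalf q f g⟩ := by
  rw [contrHalf_eq_reindex_arc (add_self_sub_two_mul_half hq), mk_reindex]
  rfl

theorem iterStep_full (f g : (Fin q → ℝ) → ℂ) :
    iterStep q ⟨q, f⟩ (q, g) = const (fullContr q f g) := by
  refine ext_eval (show q + q - 2 * q = 0 by omega) fun t => ?_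
  rw [eval_iterStep ⟨q, f⟩ le_rfl le_rfl]
  calc ∫ s, _ * _ ∂μpos q = ∫ s, f (s ∘ Fin.rev) * g s ∂μpos q := by
        refine integral_congr_ae (.of_forall fun s => ?_)
        refine congrArg₂ _ (congrArg f (funext fun j => ?_)) (congrArg g (funext fun j => ?_))
        · simp [← pad_val s j.rev, Fin.val_rev, Nat.sub_sub, Nat.add_comm]
        · simp [pad_val]
    _ = fullContr q f g := by
        rw [← integral_comp_rev]
        simp [fullContr, μpos, Function.comp_def]

end IterStep

section Asymptotics

variable {α ι : Type*} {q : ℕ} {l : Filter α} {lam : ℂ} {f : α → ι → (Fin q → ℝ) → ℂ}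
  {g h : α → (Fin q → ℝ) → ℂ}

/-- The family `g` consists of square-integrable functions and is asymptotic to `h` in `L²` along
the filter `l`. -/
structure IsL2Asymptotic (l : Filter α) (g h : α → (Fin q → ℝ) → ℂ) : Prop where
  memLp : ∀ n, MemLp (g n) 2 (μpos q)
  tendsto : Tendsto (fun n => L2norm q (g n - h n)) l (𝓝 0)

/-- The hypotheses on the kernels: along `l`, all inner products converge to `lam` and every
`f n i` acts on every `f n j` from the left as the identity under `⌢_{q/2}`. -/
structure IsAsymptoticIdempotentFamily (l : Filter α) (lam : ℂ)
    (f : α → ι → (Fin q → ℝ) → ℂ) : Prop where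
  memLp : ∀ n i, MemLp (f n i) 2 (μpos q)
  isSymmFn : ∀ n i, IsSymmFn q (f n i)
  tendsto_inner : ∀ i j, Tendsto (fun n => L2inner q (f n i) (f n j)) l (𝓝 lam)
  tendsto_contrHalf : ∀ i j,
    Tendsto (fun n => L2norm q (contrHalf q (f n i) (f n j) - f n j)) l (𝓝 0)

theorem IsL2Asymptotic.refl (hg : ∀ n, MemLp (g n) 2 (μpos q)) : IsL2Asymptotic l g g :=
  ⟨hg, by simp [L2norm, tendsto_const_nhds]⟩

theorem IsL2Asymptotic.tendsto_L2inner {u : α → (Fin q → ℝ) → ℂ} {B : ℝ}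
    (hg : IsL2Asymptotic l g h) (hh : ∀ n, MemLp (h n) 2 (μpos q))
    (hu : ∀ n, MemLp (u n) 2 (μpos q)) (hB : Tendsto (fun n => L2norm q (u n)) l (𝓝 B))
    (hlim : Tendsto (fun n => L2inner q (h n) (u n)) l (𝓝 lam)) :
    Tendsto (fun n => L2inner q (g n) (u n)) l (𝓝 lam) := by
  refine hlim.congr_dist (squeeze_zero (fun _ => dist_nonneg) (fun n => ?_)
    (by simpa using hg.tendsto.mul hB))
  rw [dist_comm, dist_eq_norm, ← L2inner_sub_left (hg.memLp n) (hh n) (hu n)]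
  exact norm_L2inner_le ((hg.memLp n).sub (hh n)) (hu n)

theorem L2norm_contrHalf_sub_le {u v w : (Fin q → ℝ) → ℂ} (hq : Even q)
    (hu : MemLp u 2 (μpos q)) (hv : MemLp v 2 (μpos q)) (hw : MemLp w 2 (μpos q)) :
    L2norm q (contrHalf q u w - w) ≤
      L2norm q (u - v) * L2norm q w + L2norm q (contrHalf q v w - w) := by
  have hsplit : contrHalf q u w - w =ᵐ[μpos q]
      contrHalf q (u - v) w + (contrHalf q v w - w) := by
    filter_upwards [contrHalf_sub_left hq hu hv hw] with t ht
    simp [ht]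
  calc L2norm q (contrHalf q u w - w)
      = L2norm q (contrHalf q (u - v) w + (contrHalf q v w - w)) := L2norm_congr_ae hsplit
    _ ≤ L2norm q (contrHalf q (u - v) w) + L2norm q (contrHalf q v w - w) :=
        L2norm_add_le (memLp_contrHalf hq (hu.sub hv) hw) ((memLp_contrHalf hq hv hw).sub hw)
    _ ≤ L2norm q (u - v) * L2norm q w + L2norm q (contrHalf q v w - w) := by
        gcongr
        exact L2norm_contrHalf_le hq (hu.sub hv) hw

namespace IsAsymptoticIdempotentFamily

theorem tendsto_L2norm (hf : IsAsymptoticIdempotentFamily l lam f) (i : ι) :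
    Tendsto (fun n => L2norm q (f n i)) l (𝓝 √lam.re) := by
  simp_rw [L2norm_eq_sqrt_re_L2inner (hf.memLp _ i)]
  exact ((Complex.continuous_re.tendsto lam).comp (hf.tendsto_inner i i)).sqrt

theorem contrHalf_asymptotic (hf : IsAsymptoticIdempotentFamily l lam f) (hq : Even q) {i : ι}
    (hg : IsL2Asymptotic l g (f · i)) (j : ι) :
    IsL2Asymptotic l (fun n => contrHalf q (g n) (f n j)) (f · j) where
  memLp n := memLp_contrHalf hq (hg.memLp n) (hf.memLp n j)
  tendsto := by
    refine squeeze_zero (fun _ => Real.sqrt_nonneg _)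
      (fun n => L2norm_contrHalf_sub_le hq (hg.memLp n) (hf.memLp n i) (hf.memLp n j)) ?_
    simpa using (hg.tendsto.mul (hf.tendsto_L2norm j)).add (hf.tendsto_contrHalf i j)

theorem tendsto_fullContr (hf : IsAsymptoticIdempotentFamily l lam f) {i : ι}
    (hg : IsL2Asymptotic l g (f · i)) (j : ι) :
    Tendsto (fun n => fullContr q (g n) (f n j)) l (𝓝 lam) := by
  simp_rw [fullContr_eq_L2inner (hf.isSymmFn _ j)]
  exact hg.tendsto_L2inner (hf.memLp · i) (hf.memLp · j) (hf.tendsto_L2norm j)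
    (hf.tendsto_inner i j)

end IsAsymptoticIdempotentFamily

/-- `IsAsymptoticTensor l f k z F` says that `F n = c n • (g₁ n ⊗ ⋯ ⊗ g_k n)`, where `c n → z` and
each `g_a n` is asymptotic in `L²` to `f n i` for some `i` depending on `a` alone. -/
inductive IsAsymptoticTensor (l : Filter α) (f : α → ι → (Fin q → ℝ) → ℂ) :
    ℕ → ℂ → (α → TupleFn) → Prop
  | const {c : α → ℂ} {z : ℂ} (hc : Tendsto c l (𝓝 z)) :
      IsAsymptoticTensor l f 0 z fun n => .const (c n)
  | tensor {k : ℕ} {z : ℂ} {F : α → TupleFn} {g : α → (Fin q → ℝ) → ℂ} {i : ι}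
      (hF : IsAsymptoticTensor l f k z F) (hg : IsL2Asymptotic l g (f · i)) :
      IsAsymptoticTensor l f (k + 1) z fun n => (F n).tensor ⟨q, g n⟩

namespace IsAsymptoticTensor

variable {k : ℕ} {z : ℂ} {F : α → TupleFn}

theorem tendsto_scalarOf (hF : IsAsymptoticTensor l f 0 z F) :
    Tendsto (fun n => scalarOf (F n)) l (𝓝 z) := by
  cases hF with
  | const hc => exact hc

theorem tensor_const (hF : IsAsymptoticTensor l f k z F) {c : α → ℂ} {w : ℂ}
    (hc : Tendsto c l (𝓝 w)) :
    IsAsymptoticTensor l f k (z * w) fun n => (F n).tensor (.const (c n)) := by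
  induction hF with
  | const hb =>
    simp_rw [const_tensor_const]
    exact const (hb.mul hc)
  | tensor _ hg ih =>
    simp_rw [tensor_const_right_comm]
    exact tensor ih hg

theorem iterStep_zero (hf : IsAsymptoticIdempotentFamily l lam f)
    (hF : IsAsymptoticTensor l f k z F) (j : ι) :
    IsAsymptoticTensor l f (k + 1) z fun n => iterStep q (F n) (0, f n j) := by
  simp_rw [_root_.iterStep_zero]
  exact tensor hF (.refl (hf.memLp · j))

theorem iterStep_half (hf : IsAsymptoticIdempotentFamily l lam f) (hq : Even q)
    (hF : IsAsymptoticTensor l f (k + 1) z F) (j : ι) :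
    IsAsymptoticTensor l f (k + 1) z fun n => iterStep q (F n) (q / 2, f n j) := by
  cases hF with
  | tensor hF hg =>
    have hhalf : q / 2 ≤ q := Nat.div_le_self q 2
    simp_rw [iterStep_tensor _ ⟨q, _⟩ hhalf hhalf, _root_.iterStep_half hq]
    exact tensor hF (hf.contrHalf_asymptotic hq hg j)

theorem iterStep_full (hf : IsAsymptoticIdempotentFamily l lam f)
    (hF : IsAsymptoticTensor l f (k + 1) z F) (j : ι) :
    IsAsymptoticTensor l f k (z * lam) fun n => iterStep q (F n) (q, f n j) := by
  cases hF with
  | tensor hF hg =>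
    simp_rw [iterStep_tensor _ ⟨q, _⟩ le_rfl le_rfl, _root_.iterStep_full]
    exact tensor_const hF (hf.tendsto_fullContr hg j)

theorem exists_iterStep (hf : IsAsymptoticIdempotentFamily l lam f) (hq : Even q) (hq0 : 0 < q)
    (hF : IsAsymptoticTensor l f k z F) {p : ℕ} (hp : p = 0 ∨ p = q / 2 ∨ p = q)
    (hpk : p ≤ q * k) (j : ι) :
    ∃ k', q * k' + 2 * p = q * k + q ∧
      IsAsymptoticTensor l f k' (if p = q then z * lam else z)
        fun n => iterStep q (F n) (p, f n j) := by
  have hhalf : 2 * (q / 2) = q := Nat.two_mul_div_two_of_even hq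
  rcases hp with rfl | hp
  · rw [if_neg hq0.ne]
    exact ⟨k + 1, by ring, iterStep_zero hf hF j⟩
  obtain ⟨k, rfl⟩ : ∃ k', k = k' + 1 :=
    Nat.exists_eq_succ_of_ne_zero (by rintro rfl; omega)
  rcases hp with rfl | rfl
  · rw [if_neg (by omega)]
    exact ⟨k + 1, by omega, iterStep_half hf hq hF j⟩
  · rw [if_pos rfl]
    exact ⟨k, by ring, iterStep_full hf hF j⟩

end IsAsymptoticTensor

theorem add_two_mul_sum_le_of_memA {m : ℕ} {r : ℕ → ℕ} (hr : memA q m r) {p : ℕ}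
    (hp : p < m - 1) : r (p + 1) + 2 * ∑ i ∈ Finset.Icc 1 p, r i ≤ (p + 1) * q := by
  rcases Nat.eq_zero_or_pos p with rfl | hp0
  · simpa using hr.1 1 le_rfl hp
  · exact hr.2 (p + 1) (by omega) hp

theorem exists_isAsymptoticTensor_iterArc (hf : IsAsymptoticIdempotentFamily l lam f)
    (hq : Even q) (hq0 : 0 < q) {m : ℕ} {r : ℕ → ℕ} (hr : memD q m r) (χ : ℕ → ι) {p : ℕ}
    (hp : p ≤ m - 1) :
    ∃ k, q * k + 2 * ∑ i ∈ Finset.Icc 1 p, r i = (p + 1) * q ∧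
      IsAsymptoticTensor l f k (lam ^ ((Finset.Icc 1 p).filter fun i => r i = q).card)
        fun n => iterArc q (f n (χ 1))
          ((List.range p).map fun k => (r (k + 1), f n (χ (k + 2)))) := by
  induction p with
  | zero =>
    refine ⟨1, by simp, ?_⟩
    have hinit := IsAsymptoticTensor.tensor (.const (tendsto_const_nhds (x := (1 : ℂ)) (f := l)))
      (.refl (hf.memLp · (χ 1)))
    simpa [iterArc, const_one_tensor] using hinit
  | succ p ih =>
    obtain ⟨k, hk, hF⟩ := ih (by omega)
    have hrk : r (p + 1) ≤ q * k := by
      have := add_two_mul_sum_le_of_memA hr.1.1 hp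
      omega
    obtain ⟨k', hk', hF'⟩ :=
      hF.exists_iterStep hf hq hq0 (hr.2 (p + 1) (by omega) hp) hrk (χ (p + 2))
    refine ⟨k', ?_, ?_⟩
    · rw [Finset.sum_Icc_succ_top (by omega), add_one_mul]
      omega
    · convert hF' using 2
      · rw [← Finset.insert_Icc_right_eq_Icc_add_one (by omega), Finset.filter_insert]
        split_ifs <;> simp [pow_succ]
      · simp [iterArc, List.range_succ]

end Asymptotics

theorem iterated_contraction_Dm_limit_general {α ι : Type*} {l : Filter α} {q : ℕ}
    (hq : Even q) (hq0 : 0 < q) {lam : ℂ} {f : α → ι → (Fin q → ℝ) → ℂ}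
    (hf : IsAsymptoticIdempotentFamily l lam f) {m : ℕ} (hm : 1 ≤ m) (χ : ℕ → ι) {r : ℕ → ℕ}
    (hr : memD q m r) :
    Tendsto (fun n => scalarOf (iterArc q (f n (χ 1))
        ((List.range (m - 1)).map fun k => (r (k + 1), f n (χ (k + 2)))))) l
      (𝓝 (lam ^ ((Finset.Icc 1 (m - 1)).filter fun p => r p = q).card)) := by
  obtain ⟨k, hk, hF⟩ := exists_isAsymptoticTensor_iterArc hf hq hq0 hr χ le_rfl
  rw [Nat.sub_add_cancel hm, ← hr.1.2] at hk
  obtain rfl : k = 0 := (mul_eq_zero.1 (by omega)).resolve_left hq0.ne'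
  exact hF.tendsto_scalarOf

/-- for tuples in `D_m`, the scalar iterated contraction converges to `λ^j`
where `j` is the number of entries equal to `q`. -/
theorem iterated_contraction_Dm_limit (q : ℕ) (hq2 : 2 ≤ q) (hqe : q % 2 = 0)
    (lam : ℝ) (hlam : 0 < lam)
    (f : ℕ → ℕ → (Fin q → ℝ) → ℂ)
    (hmem : ∀ n i, MeasureTheory.MemLp (f n i) 2 (μpos q))
    (hsym : ∀ n i, IsSymmFn q (f n i))
    (hinner : ∀ i j, Filter.Tendsto (fun n => L2inner q (f n i) (f n j)) Filter.atTop
      (nhds (lam : ℂ)))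
    (hcontr : ∀ i j, Filter.Tendsto (fun n => L2norm q (fun t =>
        reindex (show q + q - 2 * (q / 2) = q by omega)
          (arc q q (q / 2) (f n i) (f n j)) t - f n j t)) Filter.atTop (nhds 0))
    (m : ℕ) (hm : 2 ≤ m) (χ : ℕ → ℕ) (r : ℕ → ℕ) (hr : memD q m r) :
    Filter.Tendsto (fun n => scalarOf (iterArc q (f n (χ 1))
        ((List.range (m - 1)).map fun k => (r (k + 1), f n (χ (k + 2))))))
      Filter.atTop
      (nhds ((lam : ℂ) ^ (((Finset.Icc 1 (m - 1)).filter fun p => r p = q).card))) := by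
  have hqe : Even q := Nat.even_iff.2 hqe
  refine iterated_contraction_Dm_limit_general hqe (by omega) ⟨hmem, hsym, hinner, ?_⟩
    (by omega) χ hr
  simp only [contrHalf_eq_reindex_arc (add_self_sub_two_mul_half hqe)]
  exact hcontr

end
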